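/- Let a budget profile be given (integer m ≥ 1, strictly increasing positive real privacy budgets ε_1 < ε_2 < ⋯ < ε_m, positive integer counts n_1, …, n_m, n = n_1 + ⋯ + n_m, Z = (n − n_m)(n − n_m + 1/4)) with sensitivity I = 1, and let s̃ ≥ 1 be an integer. Then the average of the OBS errors of the 2^{−(k+1)}-scaled profiles over k = 1, …, s̃ satisfies (1/s̃) · Σ_{k=1}^{s̃} errO_1(2^{−(k+1)}) ≤ min( 32(4^{s̃} − 1)/(3 s̃ ε_1²) , Z + 32(4^{s̃} − 1)/(3 s̃ ε_m²) ). (This is the bound on the average noisy-publication error ērr_NOP per time slot in Theorem 2 for Personalized Budget Distribution, where the k-th publication in a window uses the budget profile scaled by 1/2^{k+1}.) -/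

import Mathlib

open Finset

/-- Sampling probability p_k(θ) = (e^{ε_k} − 1)/(e^{θ} − 1). -/
noncomputable def samplingP {m : ℕ} (ε : Fin m → ℝ) (k : Fin m) (θ : ℝ) : ℝ :=
  (Real.exp (ε k) - 1) / (Real.exp θ - 1)

/-- Sampling error err_s(θ). -/
noncomputable def errS {m : ℕ} (ε : Fin m → ℝ) (nn : Fin m → ℕ) (θ : ℝ) : ℝ :=
  (∑ k, if ε k < θ then (nn k : ℝ) * samplingP ε k θ * (1 - samplingP ε k θ) else 0)
    + (∑ k, if ε k < θ then (nn k : ℝ) * (1 - samplingP ε k θ) else 0) ^ 2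

/-- Noise error err_dp(θ) = 2I²/θ². -/
noncomputable def errDP (I θ : ℝ) : ℝ := 2 * I ^ 2 / θ ^ 2

/-- Total error err(θ) = err_s(θ) + err_dp(θ). -/
noncomputable def errTot {m : ℕ} (ε : Fin m → ℝ) (nn : Fin m → ℕ) (I θ : ℝ) : ℝ :=
  errS ε nn θ + errDP I θ

/-- OBS error: errO_I = min_{1 ≤ j ≤ m} err(ε_j). -/
noncomputable def errO {m : ℕ} (hm : 0 < m) (ε : Fin m → ℝ) (nn : Fin m → ℕ) (I : ℝ) : ℝ :=
  Finset.univ.inf' (Finset.univ_nonempty_iff.mpr (Fin.pos_iff_nonempty.mp hm))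
    (fun j => errTot ε nn I (ε j))

/-- Index of the smallest budget ε_1. -/
def firstIdx {m : ℕ} (hm : 0 < m) : Fin m := ⟨0, hm⟩

/-- Index of the largest budget ε_m. -/
def lastIdx {m : ℕ} (hm : 0 < m) : Fin m := ⟨m - 1, Nat.sub_lt hm Nat.one_pos⟩

/-- Z = (n − n_m)(n − n_m + 1/4). -/
noncomputable def Zval {m : ℕ} (hm : 0 < m) (nn : Fin m → ℕ) : ℝ :=
  ((∑ j, (nn j : ℝ)) - nn (lastIdx hm)) * ((∑ j, (nn j : ℝ)) - nn (lastIdx hm) + 1 / 4)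

/-- N-th square harmonic number H²_N = Σ_{k=1}^N 1/k². -/
noncomputable def sqHarmonic (N : ℕ) : ℝ := ∑ k ∈ Finset.Icc 1 N, 1 / (k : ℝ) ^ 2

/-!
The minimum over the thresholds defining the OBS error is bounded by its values at the two ends. No
budget lies below the smallest one, so there only the noise error remains. At the largest budget
every user outside the last group contributes at most `1/4` to the sampling variance and at most `1`
to the sampling bias, so the sampling error is at most `Z`. Scaling the budgets by `2 ^ (-(k + 1))`
multiplies the noise error by `4 ^ (k + 1)`, and a geometric sum gives the average.
-/

open scoped BigOperators

section SamplingError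

variable {m : ℕ} {ε : Fin m → ℝ} {θ : ℝ}

/-- The number of users whose budget lies strictly below the threshold `θ`; only these users
contribute to the sampling error `errS`. -/
noncomputable def usersBelow (ε : Fin m → ℝ) (nn : Fin m → ℕ) (θ : ℝ) : ℕ :=
  ∑ k with ε k < θ, nn k

lemma usersBelow_add_le_sum (ε : Fin m → ℝ) (nn : Fin m → ℕ) (j : Fin m) :
    usersBelow ε nn (ε j) + nn j ≤ ∑ k, nn k := by
  have hj : j ∉ univ.filter (fun k => ε k < ε j) := by simp
  rw [usersBelow, add_comm, ← sum_insert hj]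
  exact sum_le_sum_of_subset (subset_univ _)

lemma samplingP_mem_Icc {k : Fin m} (h0 : 0 ≤ ε k) (hθ : ε k < θ) :
    samplingP ε k θ ∈ Set.Icc (0 : ℝ) 1 := by
  have hnum : 0 ≤ Real.exp (ε k) - 1 := sub_nonneg.mpr (Real.one_le_exp h0)
  have hlt : Real.exp (ε k) - 1 < Real.exp θ - 1 := sub_lt_sub_right (Real.exp_lt_exp.mpr hθ) 1
  have hden : 0 < Real.exp θ - 1 := hnum.trans_lt hlt
  exact ⟨div_nonneg hnum hden.le, (div_le_one hden).mpr hlt.le⟩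

lemma sampling_variance_le (ε : Fin m → ℝ) (nn : Fin m → ℕ) (θ : ℝ) :
    ∑ k with ε k < θ, (nn k : ℝ) * samplingP ε k θ * (1 - samplingP ε k θ)
      ≤ usersBelow ε nn θ * (1 / 4) := by
  have hquarter (p : ℝ) : p * (1 - p) ≤ 1 / 4 := by linarith [sq_nonneg (p - 1 / 2)]
  rw [usersBelow, Nat.cast_sum, sum_mul]
  refine sum_le_sum fun k _ => ?_
  rw [mul_assoc]
  exact mul_le_mul_of_nonneg_left (hquarter _) (Nat.cast_nonneg _)

lemma sampling_bias_mem_Icc (nn : Fin m → ℕ) (h0 : ∀ k, 0 ≤ ε k) :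
    ∑ k with ε k < θ, (nn k : ℝ) * (1 - samplingP ε k θ)
      ∈ Set.Icc (0 : ℝ) (usersBelow ε nn θ) := by
  have hprob {k : Fin m} (hk : k ∈ univ.filter fun k => ε k < θ) :
      samplingP ε k θ ∈ Set.Icc (0 : ℝ) 1 :=
    samplingP_mem_Icc (h0 k) (mem_filter.mp hk).2
  rw [usersBelow, Nat.cast_sum]
  refine ⟨sum_nonneg fun k hk => ?_, sum_le_sum fun k hk => ?_⟩
  · exact mul_nonneg (Nat.cast_nonneg _) (sub_nonneg.mpr (hprob hk).2)
  · exact mul_le_of_le_one_right (Nat.cast_nonneg _) (sub_le_self 1 (hprob hk).1)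

lemma errS_eq_zero (nn : Fin m → ℕ) (hθ : ∀ k, θ ≤ ε k) : errS ε nn θ = 0 := by
  simp [errS, fun k => (hθ k).not_gt]

lemma errS_le (nn : Fin m → ℕ) (h0 : ∀ k, 0 ≤ ε k) :
    errS ε nn θ ≤ usersBelow ε nn θ * (usersBelow ε nn θ + 1 / 4) := by
  obtain ⟨hbias_nonneg, hbias_le⟩ := sampling_bias_mem_Icc (θ := θ) nn h0
  calc errS ε nn θ
      = ∑ k with ε k < θ, (nn k : ℝ) * samplingP ε k θ * (1 - samplingP ε k θ)
          + (∑ k with ε k < θ, (nn k : ℝ) * (1 - samplingP ε k θ)) ^ 2 := by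
        rw [errS, sum_filter, sum_filter]
    _ ≤ usersBelow ε nn θ * (1 / 4) + (usersBelow ε nn θ : ℝ) ^ 2 :=
        add_le_add (sampling_variance_le ε nn θ) (pow_le_pow_left₀ hbias_nonneg hbias_le 2)
    _ = usersBelow ε nn θ * (usersBelow ε nn θ + 1 / 4) := by ring

end SamplingError

lemma errDP_mul (I c θ : ℝ) : errDP I (c * θ) = (c ^ 2)⁻¹ * errDP I θ := by
  rw [errDP, errDP, mul_pow]
  ring

section OBSError

variable {m : ℕ} (hm : 0 < m) {ε : Fin m → ℝ} (nn : Fin m → ℕ) (I : ℝ)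

lemma errS_lastIdx_le_Zval (h0 : ∀ k, 0 ≤ ε k) :
    errS ε nn (ε (lastIdx hm)) ≤ Zval hm nn := by
  have hcount : (usersBelow ε nn (ε (lastIdx hm)) : ℝ) ≤ ∑ j, (nn j : ℝ) - nn (lastIdx hm) :=
    le_sub_iff_add_le.mpr (mod_cast usersBelow_add_le_sum ε nn (lastIdx hm))
  have hN : 0 ≤ ∑ j, (nn j : ℝ) - nn (lastIdx hm) := (Nat.cast_nonneg _).trans hcount
  refine (errS_le nn h0).trans ?_
  unfold Zval
  gcongr

lemma errO_le_errDP_firstIdx (hmono : Monotone ε) :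
    errO hm ε nn I ≤ errDP I (ε (firstIdx hm)) := by
  have hmin (k : Fin m) : ε (firstIdx hm) ≤ ε k := hmono (Nat.zero_le k.1)
  calc errO hm ε nn I ≤ errTot ε nn I (ε (firstIdx hm)) := inf'_le _ (mem_univ _)
    _ = errDP I (ε (firstIdx hm)) := by rw [errTot, errS_eq_zero nn hmin, zero_add]

lemma errO_le_Zval_add_errDP_lastIdx (h0 : ∀ k, 0 ≤ ε k) :
    errO hm ε nn I ≤ Zval hm nn + errDP I (ε (lastIdx hm)) :=
  calc errO hm ε nn I ≤ errTot ε nn I (ε (lastIdx hm)) := inf'_le _ (mem_univ _)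
    _ ≤ Zval hm nn + errDP I (ε (lastIdx hm)) := by
        rw [errTot]
        gcongr
        exact errS_lastIdx_le_Zval hm nn h0

variable {ι : Type*} {t : Finset ι} {c : ι → ℝ}

lemma expect_errO_mul_le_errDP_firstIdx (hmono : Monotone ε) (hc : ∀ i ∈ t, 0 ≤ c i) :
    𝔼 i ∈ t, errO hm (fun j => c i * ε j) nn I
      ≤ (𝔼 i ∈ t, (c i ^ 2)⁻¹) * errDP I (ε (firstIdx hm)) := by
  rw [expect_mul]
  refine expect_le_expect fun i hi => ?_
  rw [← errDP_mul]
  exact errO_le_errDP_firstIdx hm nn I (hmono.const_mul (hc i hi))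

lemma expect_errO_mul_le_Zval_add_errDP_lastIdx (ht : t.Nonempty) (h0 : ∀ k, 0 ≤ ε k)
    (hc : ∀ i ∈ t, 0 ≤ c i) :
    𝔼 i ∈ t, errO hm (fun j => c i * ε j) nn I
      ≤ Zval hm nn + (𝔼 i ∈ t, (c i ^ 2)⁻¹) * errDP I (ε (lastIdx hm)) := by
  rw [expect_mul, ← expect_const ht (Zval hm nn), ← expect_add_distrib]
  refine expect_le_expect fun i hi => ?_
  rw [← errDP_mul]
  exact errO_le_Zval_add_errDP_lastIdx hm nn I fun j => mul_nonneg (hc i hi) (h0 j)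

end OBSError

lemma sum_Icc_inv_sq_half_pow (s : ℕ) :
    ∑ k ∈ Icc 1 s, (((1 / 2 : ℝ) ^ (k + 1)) ^ 2)⁻¹ = 16 * ((4 : ℝ) ^ s - 1) / 3 := by
  have hterm (k : ℕ) : (((1 / 2 : ℝ) ^ (k + 1)) ^ 2)⁻¹ = 4 * 4 ^ k := by
    rw [pow_right_comm, ← inv_pow, pow_succ']
    norm_num
  calc ∑ k ∈ Icc 1 s, (((1 / 2 : ℝ) ^ (k + 1)) ^ 2)⁻¹
      = 4 * ∑ k ∈ Ico 1 (s + 1), (4 : ℝ) ^ k := by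
        simp only [hterm, mul_sum, Ico_add_one_right_eq_Icc]
    _ = 16 * ((4 : ℝ) ^ s - 1) / 3 := by
        rw [geom_sum_Ico (by norm_num) (Nat.le_add_left 1 s)]
        ring

lemma expect_inv_sq_half_pow_mul_errDP (s : ℕ) (I x : ℝ) :
    (𝔼 k ∈ Icc 1 s, (((1 / 2 : ℝ) ^ (k + 1)) ^ 2)⁻¹) * errDP I x
      = 32 * I ^ 2 * ((4 : ℝ) ^ s - 1) / (3 * (s : ℝ) * x ^ 2) := by
  rw [expect_eq_sum_div_card, sum_Icc_inv_sq_half_pow, Nat.card_Icc, Nat.add_sub_cancel, errDP,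
    div_div, div_mul_div_comm]
  ring

theorem pbd_avg_obs_publication_error_general {m : ℕ} (hm : 0 < m) {ε : Fin m → ℝ}
    (nn : Fin m → ℕ) (I : ℝ) (hpos : ∀ j, 0 < ε j) (hmono : Monotone ε) {s : ℕ} (hs : 1 ≤ s) :
    (1 / (s : ℝ)) *
        ∑ k ∈ Finset.Icc 1 s, errO hm (fun j => (1 / 2 : ℝ) ^ (k + 1) * ε j) nn I ≤
      min (32 * I ^ 2 * ((4 : ℝ) ^ s - 1) / (3 * (s : ℝ) * (ε (firstIdx hm)) ^ 2))
        (Zval hm nn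
          + 32 * I ^ 2 * ((4 : ℝ) ^ s - 1) / (3 * (s : ℝ) * (ε (lastIdx hm)) ^ 2)) := by
  have havg (f : ℕ → ℝ) : (1 / (s : ℝ)) * ∑ k ∈ Icc 1 s, f k = 𝔼 k ∈ Icc 1 s, f k := by
    rw [expect_eq_sum_div_card, Nat.card_Icc, Nat.add_sub_cancel, one_div_mul_eq_div]
  have hscale : ∀ k ∈ Icc 1 s, (0 : ℝ) ≤ (1 / 2) ^ (k + 1) := fun k _ => by positivity
  rw [havg, ← expect_inv_sq_half_pow_mul_errDP, ← expect_inv_sq_half_pow_mul_errDP]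
  exact le_min (expect_errO_mul_le_errDP_firstIdx hm nn I hmono hscale)
    (expect_errO_mul_le_Zval_add_errDP_lastIdx hm nn I (nonempty_Icc.mpr hs)
      (fun j => (hpos j).le) hscale)

/-- Bound on the average noisy-publication error per time slot in Theorem 2 for
Personalized Budget Distribution: the k-th publication uses the profile scaled by
1/2^{k+1}, and the average OBS error is at most
min(32(4^s̃−1)/(3s̃ε_1²), Z + 32(4^s̃−1)/(3s̃ε_m²)). -/
theorem pbd_avg_obs_publication_error (m : ℕ) (hm : 0 < m) (ε : Fin m → ℝ) (nn : Fin m → ℕ)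
    (hpos : ∀ j, 0 < ε j) (hmono : StrictMono ε) (hcount : ∀ j, 0 < nn j)
    (s : ℕ) (hs : 1 ≤ s) :
    (1 / (s : ℝ)) *
        ∑ k ∈ Finset.Icc 1 s, errO hm (fun j => (1 / 2 : ℝ) ^ (k + 1) * ε j) nn 1 ≤
      min (32 * ((4 : ℝ) ^ s - 1) / (3 * (s : ℝ) * (ε (firstIdx hm)) ^ 2))
        (Zval hm nn + 32 * ((4 : ℝ) ^ s - 1) / (3 * (s : ℝ) * (ε (lastIdx hm)) ^ 2)) := by
  simpa only [one_pow, mul_one] using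
    pbd_avg_obs_publication_error_general hm nn 1 hpos hmono.monotone hs
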